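/- Let A be the ring of integers of a number field K. Let G = ⟨σ⟩ be a finite cyclic subgroup of GL_2(A) acting linearly on R = A[X,Y] (fixing A). Let ε_1, ε_2 be the eigenvalues of σ (in an algebraic closure of K). If ε_1 = ε_2, then the ring of invariants R^G is Cohen-Macaulay. -/

import Mathlib

/-- A Noetherian local ring is Cohen–Macaulay if it admits a regular sequence, consisting of
elements of the maximal ideal, whose length equals the Krull dimension of the ring. -/
def IsCohenMacaulayLocalRing (R : Type*) [CommRing R] [IsLocalRing R] : Prop :=
  ∃ (n : ℕ) (rs : List R), ringKrullDim R = n ∧ rs.length = n ∧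
    (∀ x ∈ rs, x ∈ IsLocalRing.maximalIdeal R) ∧ RingTheory.Sequence.IsRegular R rs

/-- A Noetherian ring is Cohen–Macaulay if all its localizations at prime ideals are
Cohen–Macaulay local rings. -/
def IsCohenMacaulayRing (R : Type*) [CommRing R] : Prop :=
  IsNoetherianRing R ∧
    ∀ (P : Ideal R) (_ : P.IsPrime), IsCohenMacaulayLocalRing (Localization.AtPrime P)

/-- The ring of invariants `R^G` of a subgroup `G ⊆ GL_n(A)` acting linearly on the
polynomial ring `R = A[X_1, …, X_n]` (fixing `A`), via the standard action of `GL_n(A)`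
on the `A`-span of `X_1, …, X_n`. -/
noncomputable def glInvariants {A : Type*} [CommRing A] {n : ℕ}
    (G : Subgroup (Matrix.GeneralLinearGroup (Fin n) A)) :
    Subalgebra A (MvPolynomial (Fin n) A) where
  carrier := {f | ∀ g ∈ G,
    MvPolynomial.aeval
      (fun i => ∑ j, ((g : Matrix (Fin n) (Fin n) A) i j) • MvPolynomial.X j) f = f}
  mul_mem' := by
    intro a b ha hb g hg
    rw [map_mul, ha g hg, hb g hg]
  add_mem' := by
    intro a b ha hb g hg
    rw [map_add, ha g hg, hb g hg]
  algebraMap_mem' := fun a g _ => MvPolynomial.aeval_C _ a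

/-!
Over a field in which the order of `σ` is invertible, `σ` is diagonalizable, so if all its
eigenvalues agree it is scalar, and `σ` is already diagonal over `A`, say with entries `eᵢ`. A
polynomial is then invariant iff each of its monomials `X ^ m` satisfies `∏ eᵢ ^ mᵢ = 1`: in the
grading in which `Xᵢ` has weight `eᵢ`, the invariants are the part of neutral weight. For
`d = orderOf σ` this part contains all `Xᵢ ^ d`, and it is a direct summand of the free
`A[X₁ᵈ, …, Xₙᵈ]`-module with basis the monomials `X ^ r`, `0 ≤ rᵢ < d`, so it is finite and flat
over a polynomial ring. The Cohen–Macaulay property passes from `A` to polynomial rings and along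
finite flat extensions.
-/

section LocalRing

open IsLocalRing RingTheory.Sequence

theorem isCohenMacaulayLocalRing_of_isWeaklyRegular {R : Type*} [CommRing R] [IsLocalRing R]
    (rs : List R) (hdim : ringKrullDim R = rs.length) (hmem : ∀ x ∈ rs, x ∈ maximalIdeal R)
    (hreg : IsWeaklyRegular R rs) : IsCohenMacaulayLocalRing R :=
  ⟨rs.length, rs, hdim, rfl, hmem, .of_isWeaklyRegular_of_mem_maximalIdeal _ hmem hreg⟩

theorem IsCohenMacaulayLocalRing.of_flat {R S : Type*} [CommRing R] [CommRing S] [IsLocalRing R]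
    [IsLocalRing S] [Algebra R S] [Module.Flat R S] [IsLocalHom (algebraMap R S)]
    (h : IsCohenMacaulayLocalRing R) (hdim : ringKrullDim S = ringKrullDim R) :
    IsCohenMacaulayLocalRing S := by
  obtain ⟨n, rs, hn, hlen, hmem, hreg⟩ := h
  refine isCohenMacaulayLocalRing_of_isWeaklyRegular (rs.map (algebraMap R S)) ?_ ?_
    hreg.toIsWeaklyRegular.of_flat
  · rw [hdim, hn, List.length_map, hlen]
  · simpa using fun x hx => map_nonunit (algebraMap R S) x (hmem x hx)

theorem IsCohenMacaulayLocalRing.of_ringEquiv {R S : Type*} [CommRing R] [CommRing S]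
    [IsLocalRing R] [IsLocalRing S] (e : R ≃+* S) (h : IsCohenMacaulayLocalRing R) :
    IsCohenMacaulayLocalRing S := by
  let := e.toRingHom.toAlgebra
  have : Module.Flat R S := RingHom.Flat.of_bijective e.bijective
  have : IsLocalHom (algebraMap R S) := inferInstanceAs (IsLocalHom (e : R →+* S))
  exact h.of_flat (ringKrullDim_eq_of_ringEquiv e).symm

theorem height_eq_height_under_of_mem_minimalPrimes_map {R S : Type*} [CommRing R] [CommRing S]
    [Algebra R S] [Algebra.HasGoingDown R S] [IsNoetherianRing R] [IsNoetherianRing S]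
    (P : Ideal S) [P.IsPrime]
    (hP : P ∈ ((P.under R).map (algebraMap R S)).minimalPrimes) :
    P.height = (P.under R).height := by
  have hfibre : (P.map (Ideal.Quotient.mk ((P.under R).map (algebraMap R S)))).height = 0 := by
    rw [Ideal.minimalPrimes_eq_comap] at hP
    obtain ⟨Q, hQ, hQP⟩ := hP
    have := hQ.1.1
    have hPQ := Ideal.map_comap_of_surjective _ Ideal.Quotient.mk_surjective Q
    rw [hQP] at hPQ
    rwa [hPQ, Ideal.height_eq_zero_iff]
  rw [Ideal.height_eq_height_add_of_liesOver_of_hasGoingDown (P.under R) P, hfibre, add_zero]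

theorem IsCohenMacaulayLocalRing.atPrime_of_flat {R S : Type*} [CommRing R] [CommRing S]
    [Algebra R S] [Module.Flat R S] [IsNoetherianRing R] [IsNoetherianRing S]
    (P : Ideal S) [P.IsPrime]
    (hP : P ∈ ((P.under R).map (algebraMap R S)).minimalPrimes)
    (h : IsCohenMacaulayLocalRing (Localization.AtPrime (P.under R))) :
    IsCohenMacaulayLocalRing (Localization.AtPrime P) := by
  let f := Localization.localRingHom (P.under R) P (algebraMap R S) rfl
  let := f.toAlgebra
  have : IsLocalHom (algebraMap (Localization.AtPrime (P.under R)) (Localization.AtPrime P)) :=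
    Localization.isLocalHom_localRingHom _ _ _ _
  have : Module.Flat (Localization.AtPrime (P.under R)) (Localization.AtPrime P) :=
    RingHom.Flat.localRingHom (RingHom.flat_algebraMap_iff.mpr ‹_›) _ _ _
  refine h.of_flat ?_
  rw [IsLocalization.AtPrime.ringKrullDim_eq_height P,
    IsLocalization.AtPrime.ringKrullDim_eq_height (P.under R),
    height_eq_height_under_of_mem_minimalPrimes_map P hP]

theorem IsCohenMacaulayRing.of_flat_of_finite {R S : Type*} [CommRing R] [CommRing S] [Algebra R S]
    [Module.Flat R S] [Module.Finite R S] (h : IsCohenMacaulayRing R) :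
    IsCohenMacaulayRing S := by
  have := h.1
  have : IsNoetherianRing S := .of_finite R S
  exact ⟨this, fun P _ => .atPrime_of_flat (R := R) P
    (Ideal.IsIntegral.mem_minimalPrimes_map_under P) (h.2 _ inferInstance)⟩

theorem IsCohenMacaulayRing.of_ringEquiv {R S : Type*} [CommRing R] [CommRing S] (e : R ≃+* S)
    (h : IsCohenMacaulayRing R) : IsCohenMacaulayRing S := by
  let := e.toRingHom.toAlgebra
  have : Module.Flat R S := RingHom.Flat.of_bijective e.bijective
  have : Module.Finite R S := RingHom.Finite.of_surjective _ e.surjective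
  exact h.of_flat_of_finite

theorem isCohenMacaulayLocalRing_of_ringKrullDim_le_one {R : Type*} [CommRing R] [IsDomain R]
    [IsLocalRing R] (h : ringKrullDim R ≤ 1) : IsCohenMacaulayLocalRing R := by
  by_cases hR : IsField R
  · exact isCohenMacaulayLocalRing_of_isWeaklyRegular []
      (by simp [ringKrullDim_eq_zero_of_isField hR]) (by simp) (by simp)
  · obtain ⟨x, hx, hx0⟩ := Submodule.exists_mem_ne_zero_of_ne_bot
      (isField_iff_maximalIdeal_eq.not.mp hR)
    have hdim : ringKrullDim R = 1 := by
      refine h.antisymm (not_lt.mp fun h0 => hR ?_)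
      have := Ring.krullDimLE_iff.mpr (Order.le_of_lt_succ h0 : ringKrullDim R ≤ (0 : ℕ))
      exact Ring.KrullDimLE.isField_of_isDomain
    refine isCohenMacaulayLocalRing_of_isWeaklyRegular [x] (by simpa using hdim)
      (by simpa using hx) ?_
    rw [isWeaklyRegular_singleton_iff]
    exact (IsRegular.of_ne_zero hx0).left.isSMulRegular

theorem isCohenMacaulayRing_of_krullDimLE_one {R : Type*} [CommRing R] [IsDomain R]
    [IsNoetherianRing R] [Ring.KrullDimLE 1 R] : IsCohenMacaulayRing R := by
  refine ⟨inferInstance, fun P _ => isCohenMacaulayLocalRing_of_ringKrullDim_le_one ?_⟩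
  rw [IsLocalization.AtPrime.ringKrullDim_eq_height P]
  exact (Ideal.height_le_ringKrullDim_of_ne_top Ideal.IsPrime.ne_top').trans
    (Ring.krullDimLE_iff.mp ‹_›)

end LocalRing

section Polynomial

open IsLocalRing RingTheory.Sequence Polynomial Pointwise

theorem isWeaklyRegular_cons_map_algebraMap {R S : Type*} [CommRing R] [CommRing S]
    [Algebra R S] {f : S} (hf : IsSMulRegular S f) [Module.Flat R (S ⧸ Ideal.span {f})]
    {rs : List R} (h : IsWeaklyRegular R rs) :
    IsWeaklyRegular S (f :: rs.map (algebraMap R S)) := by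
  have hspan : f • (⊤ : Submodule S S) = Ideal.span {f} := by
    rw [← Submodule.ideal_span_singleton_smul, smul_eq_mul, Ideal.mul_top]
  rw [isWeaklyRegular_cons_iff, (Submodule.quotEquivOfEq _ _ hspan).isWeaklyRegular_congr,
    isWeaklyRegular_map_algebraMap_iff,
    ← isWeaklyRegular_map_algebraMap_iff (S := S ⧸ Ideal.span {f})]
  exact ⟨hf, h.of_flat⟩

theorem isMaximal_of_monic_mem {R : Type*} [CommRing R] {P : Ideal R[X]} [P.IsPrime]
    [(P.under R).IsMaximal] {f : R[X]} (hf : f.Monic) (hfP : f ∈ P) : P.IsMaximal := by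
  have := hf.finite_quotient
  have hle : Ideal.span {f} ≤ P := (Ideal.span_singleton_le_iff_mem _).mpr hfP
  have : Module.Finite R (R[X] ⧸ P) :=
    .of_surjective (Ideal.Quotient.factorₐ R hle).toLinearMap (Ideal.Quotient.factor_surjective hle)
  have := Ideal.Quotient.isDomain P
  let := Ideal.Quotient.field (P.under R)
  have : Algebra.IsIntegral (R ⧸ P.under R) (R[X] ⧸ P) := Algebra.IsIntegral.tower_top R
  exact Ideal.Quotient.maximal_of_isField _
    (isField_of_isIntegral_of_isField' (Field.toIsField (R ⧸ P.under R)))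

theorem IsCohenMacaulayLocalRing.polynomial_atPrime {R : Type*} [CommRing R] [IsLocalRing R]
    [IsNoetherianRing R] (h : IsCohenMacaulayLocalRing R) (P : Ideal R[X]) [P.IsPrime]
    [P.LiesOver (maximalIdeal R)] : IsCohenMacaulayLocalRing (Localization.AtPrime P) := by
  have hunder : P.under R = maximalIdeal R := (Ideal.over_def P _).symm
  have hmax : (P.under R).IsMaximal := hunder ▸ inferInstance
  by_cases hP : P = (maximalIdeal R).map C
  · have : IsLocalHom (algebraMap R (Localization.AtPrime P)) := by
      refine ((local_hom_TFAE _).out 0 4).mpr ?_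
      rw [← Ideal.under_def, ← Ideal.under_under (B := R[X]),
        IsLocalization.AtPrime.under_maximalIdeal _ P, hunder]
    have : Module.Flat R (Localization.AtPrime P) := .trans R R[X] _
    refine h.of_flat ?_
    rw [IsLocalization.AtPrime.ringKrullDim_eq_height P, hP, height_map_C,
      maximalIdeal_height_eq_ringKrullDim]
  -- Now `P` has one more unit of height than `maximalIdeal R` and contains a monic `f`; since
  -- `R[X] ⧸ (f)` is free over `R`, a regular sequence of `R` stays regular after prepending `f`.
  obtain ⟨n, rs, hdim, hlen, hmem, hreg⟩ := h
  obtain ⟨f, hf, hPf⟩ := exists_monic_span_sup_map_eq R P hmax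
    (hunder.symm ▸ hP : P ≠ (P.under R).map C)
  have hfP : f ∈ P := hPf ▸ Ideal.mem_sup_right (Ideal.mem_span_singleton_self f)
  have := isMaximal_of_monic_mem hf hfP
  have := hf.free_quotient
  have hregP := isWeaklyRegular_cons_map_algebraMap hf.isRegular.left.isSMulRegular
    hreg.toIsWeaklyRegular
  have hmemP : ∀ g ∈ f :: rs.map (algebraMap R R[X]), g ∈ P := by
    simp only [List.forall_mem_cons, List.forall_mem_map]
    exact ⟨hfP, fun r hr => Ideal.mem_of_liesOver P (maximalIdeal R) r |>.mp (hmem r hr)⟩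
  refine isCohenMacaulayLocalRing_of_isWeaklyRegular _ ?_ ?_
    (hregP.isRegular_of_isLocalization_of_mem (Localization.AtPrime P) P hmemP).toIsWeaklyRegular
  · rw [IsLocalization.AtPrime.ringKrullDim_eq_height P,
      height_eq_height_add_one (maximalIdeal R) P, List.length_map, List.length_cons,
      List.length_map, hlen]
    push_cast
    rw [maximalIdeal_height_eq_ringKrullDim, hdim]
  · simpa only [List.forall_mem_map, IsLocalization.AtPrime.to_map_mem_maximal_iff _ P] using hmemP

theorem IsCohenMacaulayLocalRing.atPrime_of_map_isLocalization {R S : Type*} [CommRing R]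
    [CommRing S] [Algebra R S] (M : Submonoid R) [IsLocalization M S] (P : Ideal R) [P.IsPrime]
    (hP : Disjoint (M : Set R) P) [(P.map (algebraMap R S)).IsPrime]
    (h : IsCohenMacaulayLocalRing (Localization.AtPrime (P.map (algebraMap R S)))) :
    IsCohenMacaulayLocalRing (Localization.AtPrime P) := by
  let Q := P.map (algebraMap R S)
  have hQ : Q.under R = P := IsLocalization.under_map_of_isPrime_disjoint M S ‹_› hP
  have : IsLocalization.AtPrime (Localization.AtPrime Q) P := by
    simpa only [← Ideal.under_def, hQ] using!
      IsLocalization.isLocalization_isLocalization_atPrime_isLocalization M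
        (Localization.AtPrime Q) Q
  exact h.of_ringEquiv (IsLocalization.algEquiv P.primeCompl (Localization.AtPrime Q)
    (Localization.AtPrime P)).toRingEquiv

attribute [local instance] Polynomial.algebra Polynomial.isLocalization in
theorem IsCohenMacaulayRing.polynomial {R : Type*} [CommRing R] (h : IsCohenMacaulayRing R) :
    IsCohenMacaulayRing R[X] := by
  have := h.1
  refine ⟨inferInstance, fun P _ => ?_⟩
  let p := P.under R
  let Rp := Localization.AtPrime p
  have hdisj : Disjoint (p.primeCompl.map C : Set R[X]) P :=
    Set.disjoint_left.mpr (by rintro _ ⟨r, hr, rfl⟩ hrP; exact hr hrP)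
  have := IsLocalization.isPrime_of_isPrime_disjoint _ Rp[X] P ‹_› hdisj
  have hover : (P.map (algebraMap R[X] Rp[X])).LiesOver (p.map (algebraMap R Rp)) :=
    IsLocalization.liesOver_of_isPrime_of_disjoint p.primeCompl _ _ hdisj
  rw [Localization.AtPrime.map_eq_maximalIdeal] at hover
  exact .atPrime_of_map_isLocalization _ P hdisj ((h.2 p inferInstance).polynomial_atPrime _)

theorem IsCohenMacaulayRing.mvPolynomial_fin {R : Type*} [CommRing R] (h : IsCohenMacaulayRing R)
    (n : ℕ) : IsCohenMacaulayRing (MvPolynomial (Fin n) R) := by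
  induction n with
  | zero => exact h.of_ringEquiv (MvPolynomial.isEmptyRingEquiv R (Fin 0)).symm
  | succ n ih => exact ih.polynomial.of_ringEquiv (MvPolynomial.finSuccEquiv R n).symm.toRingEquiv

theorem IsCohenMacaulayRing.mvPolynomial {R : Type*} [CommRing R] (h : IsCohenMacaulayRing R)
    (ι : Type*) [Finite ι] : IsCohenMacaulayRing (MvPolynomial ι R) :=
  (h.mvPolynomial_fin (Nat.card ι)).of_ringEquiv
    (MvPolynomial.renameEquiv R (Finite.equivFin ι).symm).toRingEquiv

end Polynomial

section WeightZero

open MvPolynomial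

variable {ι A M : Type*} [CommRing A] [AddCommMonoid M]

/-- The `A`-algebra of polynomials in variables of weights `w` all of whose monomials have weight
zero. With weights in `Additive A` it describes the invariants of a diagonal matrix. -/
noncomputable def weightZeroSubalgebra (A : Type*) [CommRing A] (w : ι → M) :
    Subalgebra A (MvPolynomial ι A) :=
  have : SetLike.GradedMonoid (weightedHomogeneousSubmodule A w) :=
    WeightedHomogeneousSubmodule.gradedMonoid
  SetLike.GradeZero.subalgebra (weightedHomogeneousSubmodule A w)

theorem mem_weightZeroSubalgebra_iff {w : ι → M} {f : MvPolynomial ι A} :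
    f ∈ weightZeroSubalgebra A w ↔ ∀ m, coeff m f ≠ 0 → Finsupp.weight w m = 0 :=
  Iff.rfl

theorem monomial_mem_weightZeroSubalgebra {w : ι → M} {m : ι →₀ ℕ} (hm : Finsupp.weight w m = 0)
    (a : A) : monomial m a ∈ weightZeroSubalgebra A w :=
  isWeightedHomogeneous_monomial w m a hm

theorem expand_mem_weightZeroSubalgebra {d : ℕ} {w : ι → M} (hw : ∀ i, d • w i = 0)
    (g : MvPolynomial ι A) : expand d g ∈ weightZeroSubalgebra A w := by
  induction g using MvPolynomial.induction_on' with
  | add g₁ g₂ h₁ h₂ => rw [map_add]; exact add_mem h₁ h₂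
  | monomial u a =>
    rw [expand_monomial]
    refine monomial_mem_weightZeroSubalgebra ?_ a
    rw [map_nsmul, Finsupp.weight_apply, Finsupp.smul_sum]
    exact Finset.sum_eq_zero fun i _ =>
      (smul_comm d (u i) (w i)).trans (by rw [hw, smul_zero])

section Fintype

variable [Fintype ι]

/-- For `r : ι → ZMod d`, the polynomial `f_r` in the decomposition
`f = ∑ r, f_r(X₁ᵈ, …, Xₙᵈ) * X ^ r` of `f` as an element of the free module with basis the monomials
`X ^ r`, `0 ≤ rᵢ < d`, over the polynomials in the `d`-th powers of the variables. -/
noncomputable def expandComponent (d : ℕ) (r : ι → ZMod d) :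
    MvPolynomial ι A →ₗ[A] MvPolynomial ι A :=
  (basisMonomials ι A).constr A fun m =>
    if ∀ i, (m i : ZMod d) = r i then monomial (m.mapRange (· / d) (Nat.zero_div d)) 1 else 0

theorem expandComponent_monomial (d : ℕ) (r : ι → ZMod d) (m : ι →₀ ℕ) (a : A) :
    expandComponent d r (monomial m a) =
      if ∀ i, (m i : ZMod d) = r i then
        monomial (m.mapRange (· / d) (Nat.zero_div d)) a else 0 := by
  have hm : monomial m a = a • basisMonomials ι A m := by simp [smul_monomial]
  rw [hm, map_smul, expandComponent, Module.Basis.constr_basis]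
  split_ifs <;> simp [smul_monomial]

theorem expandComponent_expand_mul {d : ℕ} [NeZero d] (r : ι → ZMod d) (g f : MvPolynomial ι A) :
    expandComponent d r (expand d g * f) = g * expandComponent d r f := by
  induction g using MvPolynomial.induction_on' with
  | add g₁ g₂ h₁ h₂ => simp only [map_add, add_mul, h₁, h₂]
  | monomial u a =>
    induction f using MvPolynomial.induction_on' with
    | add f₁ f₂ h₁ h₂ => simp only [map_add, mul_add, h₁, h₂]
    | monomial m b =>
      have hdiv : (d • u + m).mapRange (· / d) (Nat.zero_div d) =
          u + m.mapRange (· / d) (Nat.zero_div d) := by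
        ext i
        simp [Nat.mul_add_div (NeZero.pos d)]
      have hmod (i : ι) : (((d • u + m) i : ℕ) : ZMod d) = m i := by simp
      simp only [expand_monomial, monomial_mul, expandComponent_monomial, hdiv, hmod, mul_ite,
        mul_zero]

/-- The exponent of the monomial `X ^ r` with `0 ≤ rᵢ < d`. -/
noncomputable def residueExponent {d : ℕ} (r : ι → ZMod d) : ι →₀ ℕ :=
  Finsupp.equivFunOnFinite.symm fun i => (r i).val

theorem sum_expand_expandComponent_mul {d : ℕ} [NeZero d] [DecidableEq ι] (f : MvPolynomial ι A) :
    ∑ r : ι → ZMod d, expand d (expandComponent d r f) * monomial (residueExponent r) 1 = f := by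
  induction f using MvPolynomial.induction_on' with
  | add f₁ f₂ h₁ h₂ => simp only [map_add, add_mul, Finset.sum_add_distrib, h₁, h₂]
  | monomial m a =>
    have hm : d • m.mapRange (· / d) (Nat.zero_div d) +
        residueExponent (fun i => (m i : ZMod d)) = m := by
      ext i
      simp [residueExponent, ZMod.val_natCast, Nat.div_add_mod]
    rw [Finset.sum_eq_single fun i => (m i : ZMod d)]
    · rw [expandComponent_monomial, if_pos fun _ => rfl, expand_monomial, monomial_mul, hm, mul_one]
    · intro r _ hr
      rw [expandComponent_monomial, if_neg fun h => hr (funext h).symm, map_zero, zero_mul]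
    · simp

theorem weight_residueExponent {d : ℕ} [NeZero d] {w : ι → M} (hw : ∀ i, d • w i = 0)
    (m : ι →₀ ℕ) :
    Finsupp.weight w (residueExponent fun i => (m i : ZMod d)) = Finsupp.weight w m := by
  simp only [Finsupp.weight_apply]
  rw [Finsupp.sum_fintype _ _ (by simp), Finsupp.sum_fintype _ _ (by simp)]
  refine Finset.sum_congr rfl fun i _ => ?_
  conv_rhs => rw [← Nat.div_add_mod (m i) d, add_nsmul, mul_comm, mul_nsmul', hw]
  simp [residueExponent, ZMod.val_natCast]

theorem expandComponent_eq_zero {d : ℕ} [NeZero d] {w : ι → M} (hw : ∀ i, d • w i = 0)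
    {f : MvPolynomial ι A} (hf : f ∈ weightZeroSubalgebra A w) {r : ι → ZMod d}
    (hr : Finsupp.weight w (residueExponent r) ≠ 0) : expandComponent d r f = 0 := by
  rw [f.as_sum, map_sum]
  refine Finset.sum_eq_zero fun m hm => ?_
  rw [expandComponent_monomial, if_neg]
  intro hmr
  obtain rfl : (fun i => (m i : ZMod d)) = r := funext hmr
  exact hr ((weight_residueExponent hw m).trans
    (mem_weightZeroSubalgebra_iff.mp hf m (mem_support_iff.mp hm)))

theorem sum_expand_expandComponent_mul_of_mem {d : ℕ} [NeZero d] {w : ι → M}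
    (hw : ∀ i, d • w i = 0) {f : MvPolynomial ι A} (hf : f ∈ weightZeroSubalgebra A w)
    [Fintype {r : ι → ZMod d // Finsupp.weight w (residueExponent r) = 0}] :
    ∑ r : {r : ι → ZMod d // Finsupp.weight w (residueExponent r) = 0},
      expand d (expandComponent d r f) * monomial (residueExponent r.1) 1 = f := by
  classical
  rw [← Finset.sum_subtype {r | Finsupp.weight w (residueExponent r) = 0} (by simp) fun r =>
    expand d (expandComponent d r f) * monomial (residueExponent r) 1, Finset.sum_filter_of_ne]
  · exact sum_expand_expandComponent_mul f
  · intro r _ hne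
    contrapose! hne
    rw [expandComponent_eq_zero hw hf hne, map_zero, zero_mul]

end Fintype

theorem finite_and_projective_of_sum_smul_eq {R S κ : Type*} [Ring R] [AddCommGroup S] [Module R S]
    [Fintype κ] (π : S →ₗ[R] κ → R) (b : κ → S) (h : ∀ s, ∑ k, π s k • b k = s) :
    Module.Finite R S ∧ Module.Projective R S := by
  have hsplit : Fintype.linearCombination R b ∘ₗ π = LinearMap.id := LinearMap.ext h
  exact ⟨.of_surjective (Fintype.linearCombination R b) fun s => ⟨π s, h s⟩,
    .of_split π _ hsplit⟩

theorem IsCohenMacaulayRing.weightZeroSubalgebra [Finite ι] (hA : IsCohenMacaulayRing A) {d : ℕ}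
    (hd : d ≠ 0) {w : ι → M} (hw : ∀ i, d • w i = 0) :
    IsCohenMacaulayRing (weightZeroSubalgebra A w) := by
  classical
  have := Fintype.ofFinite ι
  have : NeZero d := ⟨hd⟩
  let S := _root_.weightZeroSubalgebra A w
  let φ : MvPolynomial ι A →ₐ[A] S := (expand d).codRestrict S (expand_mem_weightZeroSubalgebra hw)
  let := φ.toRingHom.toAlgebra
  let π : S →ₗ[MvPolynomial ι A]
      {r : ι → ZMod d // Finsupp.weight w (residueExponent r) = 0} → MvPolynomial ι A :=
    { toFun f r := expandComponent d r f
      map_add' f g := by ext1 r; exact map_add _ _ _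
      map_smul' g f := by ext1 r; exact expandComponent_expand_mul r.1 g f }
  let b (r : {r : ι → ZMod d // Finsupp.weight w (residueExponent r) = 0}) : S :=
    ⟨monomial (residueExponent r.1) 1, monomial_mem_weightZeroSubalgebra r.2 1⟩
  obtain ⟨_, _⟩ := finite_and_projective_of_sum_smul_eq π b fun f => Subtype.ext <| by
    rw [AddSubmonoidClass.coe_finsetSum]
    exact sum_expand_expandComponent_mul_of_mem hw f.2
  exact (hA.mvPolynomial ι).of_flat_of_finite

end WeightZero

section Invariants

open MvPolynomial

variable {A : Type*} [CommRing A] {n : ℕ}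

theorem mem_glInvariants_iff {G : Subgroup (Matrix.GeneralLinearGroup (Fin n) A)}
    {f : MvPolynomial (Fin n) A} :
    f ∈ glInvariants G ↔ ∀ g ∈ G, bind₁ (g : Matrix (Fin n) (Fin n) A).toMvPolynomial f = f := by
  have hX (g : Matrix (Fin n) (Fin n) A) :
      g.toMvPolynomial = fun i => ∑ j, g i j • (X j : MvPolynomial (Fin n) A) := by
    ext1 i
    simp [Matrix.toMvPolynomial, ← C_mul_X_eq_monomial, smul_eq_C_mul]
  simp only [hX]
  exact Iff.rfl

theorem mem_glInvariants_zpowers_iff {σ : Matrix.GeneralLinearGroup (Fin n) A}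
    {f : MvPolynomial (Fin n) A} :
    f ∈ glInvariants (Subgroup.zpowers σ) ↔
      bind₁ (σ : Matrix (Fin n) (Fin n) A).toMvPolynomial f = f := by
  rw [mem_glInvariants_iff]
  refine ⟨fun h => h σ (Subgroup.mem_zpowers σ), fun h g hg => ?_⟩
  have hmul (g h : Matrix.GeneralLinearGroup (Fin n) A) :
      bind₁ ((g * h : Matrix.GeneralLinearGroup (Fin n) A) :
        Matrix (Fin n) (Fin n) A).toMvPolynomial f =
      bind₁ (h : Matrix (Fin n) (Fin n) A).toMvPolynomial
        (bind₁ (g : Matrix (Fin n) (Fin n) A).toMvPolynomial f) := by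
    rw [bind₁_bind₁, Units.val_mul]
    exact congrArg (bind₁ · f) (funext (Matrix.toMvPolynomial_mul _ _))
  let stabilizer : Subgroup (Matrix.GeneralLinearGroup (Fin n) A) :=
    { carrier := {g | bind₁ (g : Matrix (Fin n) (Fin n) A).toMvPolynomial f = f}
      one_mem' := by simp
      mul_mem' {g h} hg hh := (hmul g h).trans ((congrArg _ hg).trans hh)
      inv_mem' {g} hg := by
        have hinv := hmul g g⁻¹
        rw [mul_inv_cancel, show bind₁ _ f = f from hg] at hinv
        simpa using hinv.symm }
  exact Subgroup.zpowers_le (H := stabilizer).mpr h hg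

theorem coeff_bind₁_toMvPolynomial_diagonal {ι : Type*} [Fintype ι] [DecidableEq ι]
    (e : ι → A) (f : MvPolynomial ι A) (m : ι →₀ ℕ) :
    coeff m (bind₁ (Matrix.diagonal e).toMvPolynomial f) = (∏ i, e i ^ m i) * coeff m f := by
  have hX : (Matrix.diagonal e).toMvPolynomial = fun i => C (e i) * X i := by
    ext1 i
    rw [Matrix.toMvPolynomial, Finset.sum_eq_single i]
    · simp [C_mul_X_eq_monomial]
    · intro j _ hj; simp [Matrix.diagonal_apply_ne' _ hj]
    · simp
  rw [hX]
  induction f using MvPolynomial.induction_on' with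
  | add f g hf hg => simp only [map_add, coeff_add, mul_add, hf, hg]
  | monomial u a =>
    have hmonomial : bind₁ (fun i => C (e i) * X i) (monomial u a) =
        monomial u ((∏ i, e i ^ u i) * a) := by
      rw [bind₁_monomial, monomial_eq, Finsupp.prod_fintype _ _ (by simp),
        Finset.prod_subset u.support.subset_univ (by simp +contextual)]
      simp only [mul_pow, Finset.prod_mul_distrib, map_mul, map_prod, map_pow]
      ring
    rw [hmonomial, coeff_monomial, coeff_monomial]
    split_ifs with h
    · rw [h]
    · rw [mul_zero]

theorem glInvariants_zpowers_eq_weightZeroSubalgebra [IsDomain A]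
    {σ : Matrix.GeneralLinearGroup (Fin n) A} {e : Fin n → A}
    (hσ : (σ : Matrix (Fin n) (Fin n) A) = Matrix.diagonal e) :
    glInvariants (Subgroup.zpowers σ) =
      weightZeroSubalgebra A fun i => Additive.ofMul (e i) := by
  ext f
  rw [mem_glInvariants_zpowers_iff, hσ, mem_weightZeroSubalgebra_iff, MvPolynomial.ext_iff]
  refine forall_congr' fun m => ?_
  have hweight : Finsupp.weight (fun i => Additive.ofMul (e i)) m =
      Additive.ofMul (∏ i, e i ^ m i) := by
    rw [Finsupp.weight_apply, Finsupp.sum_fintype _ _ (by simp)]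
    simp
  rw [coeff_bind₁_toMvPolynomial_diagonal, mul_left_eq_self₀, hweight, ofMul_eq_zero,
    or_iff_not_imp_right]

end Invariants

section Scalar

open Polynomial

theorem eq_algebraMap_of_pow_eq_one_of_isNilpotent {L B : Type*} [Field L] [Ring B] [Algebra L B]
    {ε : L} {T : B} {k : ℕ} (hk : (k : L) ≠ 0) (hT : T ^ k = 1)
    (hnil : IsNilpotent (T - algebraMap L B ε)) : T = algebraMap L B ε := by
  have hsep : (X ^ k - C (1 : L)).Separable := separable_X_pow_sub_C 1 hk one_ne_zero
  have hdvd_one : minpoly L T ∣ X ^ k - C 1 := minpoly.dvd L T (by simp [hT])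
  have hradical := (hsep.squarefree.squarefree_of_dvd hdvd_one).isRadical
  obtain ⟨m, hm⟩ := hnil
  obtain ⟨q, hq⟩ : minpoly L T ∣ X - C ε :=
    hradical m _ (minpoly.dvd L T (by simpa using hm))
  simpa [sub_eq_zero] using congrArg (aeval T) hq

theorem isDiag_of_charpoly_map_eq_pow {A L ι : Type*} [CommRing A] [Field L] [Fintype ι]
    [DecidableEq ι] {φ : A →+* L} (hφ : Function.Injective φ) {σ : Matrix ι ι A} {k : ℕ}
    (hk : (k : A) ≠ 0) (hσ : σ ^ k = 1) {ε : L} {m : ℕ}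
    (hchar : (σ.map φ).charpoly = (X - C ε) ^ m) : σ.IsDiag := by
  have hmap : σ.map φ = algebraMap L (Matrix ι ι L) ε := by
    refine eq_algebraMap_of_pow_eq_one_of_isNilpotent (k := k) ?_ ?_ ⟨m, ?_⟩
    · rwa [← map_natCast φ, ne_eq, map_eq_zero_iff φ hφ]
    · rw [← RingHom.mapMatrix_apply, ← map_pow, hσ, map_one]
    · simpa [hchar] using (σ.map φ).aeval_self_charpoly
  intro i j hij
  apply hφ
  simpa [Matrix.algebraMap_matrix_apply, hij] using congrFun₂ hmap i j

end Scalar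

open Polynomial in
/-- Since `orderOf σ = 0` when `σ` has infinite order, `hσ` forces `σ` to have finite order. -/
theorem cyclic_equal_eigenvalues_invariants_cohenMacaulay_general {A L : Type*} [CommRing A]
    [Field L] (hA : IsCohenMacaulayRing A) {φ : A →+* L} (hφ : Function.Injective φ) {n : ℕ}
    (σ : Matrix.GeneralLinearGroup (Fin n) A) (hσ : (orderOf σ : A) ≠ 0) {ε : L}
    (hchar : ((σ : Matrix (Fin n) (Fin n) A).map φ).charpoly = (X - C ε) ^ n) :
    IsCohenMacaulayRing (glInvariants (Subgroup.zpowers σ)) := by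
  have : IsDomain A := hφ.isDomain
  have hpow : (σ : Matrix (Fin n) (Fin n) A) ^ orderOf σ = 1 := by
    rw [← Units.val_pow_eq_pow_val, pow_orderOf_eq_one, Units.val_one]
  have hdiag := (isDiag_of_charpoly_map_eq_pow hφ hσ hpow hchar).diagonal_diag
  rw [glInvariants_zpowers_eq_weightZeroSubalgebra hdiag.symm]
  refine hA.weightZeroSubalgebra (d := orderOf σ) (fun h => hσ (by rw [h, Nat.cast_zero])) ?_
  rw [← hdiag, Matrix.diagonal_pow, Matrix.diagonal_eq_one] at hpow
  exact fun i => congrArg Additive.ofMul (congrFun hpow i)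

open NumberField Polynomial in
/-- Let `A` be the ring of integers of a number field `K` and let `G = ⟨σ⟩ ⊆ GL_2(A)` be a
finite cyclic group acting linearly on `R = A[X, Y]` (fixing `A`). Let `ε₁, ε₂` be the
eigenvalues of `σ` in an algebraic closure of `K` (the roots of its characteristic
polynomial). If `ε₁ = ε₂` then `R^G` is Cohen–Macaulay. -/
theorem cyclic_equal_eigenvalues_invariants_cohenMacaulay
    (K : Type) [Field K] [NumberField K]
    (σ : Matrix.GeneralLinearGroup (Fin 2) (𝓞 K)) (hσ : IsOfFinOrder σ)
    (ε₁ ε₂ : AlgebraicClosure K)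
    (hchar : Matrix.charpoly
        ((σ : Matrix (Fin 2) (Fin 2) (𝓞 K)).map
          ⇑((algebraMap K (AlgebraicClosure K)).comp (algebraMap (𝓞 K) K)))
      = (X - C ε₁) * (X - C ε₂))
    (heq : ε₁ = ε₂) :
    IsCohenMacaulayRing ↥(glInvariants (Subgroup.zpowers σ)) := by
  subst heq
  have hinj : Function.Injective
      ((algebraMap K (AlgebraicClosure K)).comp (algebraMap (𝓞 K) K)) :=
    (algebraMap K _).injective.comp RingOfIntegers.coe_injective
  exact cyclic_equal_eigenvalues_invariants_cohenMacaulay_general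
    isCohenMacaulayRing_of_krullDimLE_one hinj σ (Nat.cast_ne_zero.mpr hσ.orderOf_pos.ne')
    (hchar.trans (sq _).symm)
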